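/- Let F : E → B be a row-finite Kumjian-Pask fibration and suppose Z(α,β) ∩ Z(σ,τ) ≠ ∅ in G_F. Then there exist morphisms a, b of B and a nonempty set I = {(α∘γ, β∘γ) : F(γ) = a} ∩ {(σ∘η, τ∘η) : F(η) = b} such that Z(α,β) ∩ Z(σ,τ) = ⋃_{(μ,ν) ∈ I} Z(μ,ν), and the sets Z(μ,ν) for (μ,ν) ∈ I are mutually disjoint. Consequently the collection {Z(μ,ν)} is a basis for a topology on G_F. -/

import Mathlib

/-!
An object of a slice category `E/X` is a morphism of `E` with target `X`. For a discrete Conduché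
fibration a lift of `c ≫ a` factors uniquely through a lift of `a`. Hence an infinite path is just a
compatible choice of lifts (`exists_path`), and its value at `c ≫ a` determines its value at `a`
(`InfPath.eq_of_fac`). This gives restrictions `res_μ` (`exists_res`) by cancelling `μ`, and, since
the Ore condition makes the morphisms through `F μ` cofinal among those with target `F X`, the
induced paths `ind_μ` (`exists_ind`); the strong Ore condition makes the latter well defined.

The relation `∼` is then an equivalence relation (`equivalence_GERel`), so equality in `G_F` can be
read off on representatives: if `[α, β, x] = [σ, τ, x]`, then
`z = ind_α (res_β x) = ind_σ (res_τ x)` is a common translate (`GERel.common`), whose existence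
rests on `exists_ind`. Writing composites in the order of the category `B`, choose `a`, `b` with
`a ≫ F α = b ≫ F σ` and `a ≫ F β = b ≫ F τ`; they exist as soon as one point lies in the
intersection. For an arbitrary point `[α, β, y] = [σ, τ, y]` of the intersection, let `γ` be the
value of `res_β y` at `a` and `η` the value of `res_τ y` at `b`. Evaluating `y` at
`a ≫ F β = b ≫ F τ` gives `γ ≫ β = η ≫ τ`, and evaluating the common translate at
`a ≫ F α = b ≫ F σ` gives `γ ≫ α = η ≫ σ`. So `(γ ≫ α, γ ≫ β)` belongs to `I`
(`exists_mem_spanSet`) and the point is `[γ ≫ α, γ ≫ β, y]` (`mk_comp`).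

Disjointness is the same evaluation: all pairs in `I` have the same image under `F`, and a point
`[μ, ν, x]` determines `ν` as the value of `x` at `F ν` and `μ` as the value of the common translate
at `F μ` (`eq_of_meet`). The basis property follows by picking the member of the union that contains
the given point.
-/

open CategoryTheory

universe v u v' u' v'' u''

namespace DCFpaper

variable {E : Type u} [Category.{v} E] {B : Type u'} [Category.{v'} B]

/-- Equality of morphisms with possibly different (but equal) endpoints. -/
def MorEq {C : Type u''} [Category.{v''} C] {W X Y Z : C} (f : W ⟶ X) (g : Y ⟶ Z) : Prop :=
  ∃ (h₁ : W = Y) (h₂ : X = Z), f = eqToHom h₁ ≫ g ≫ eqToHom h₂.symm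

/-- A lift of a factorization `F φ = l ≫ ρ` to a factorization of `φ`. -/
structure ConducheLift (F : E ⥤ B) {Y X : E} (φ : Y ⟶ X) {M : B}
    (l : F.obj Y ⟶ M) (ρ : M ⟶ F.obj X) where
  mid : E
  lam : Y ⟶ mid
  rho : mid ⟶ X
  comp_eq : lam ≫ rho = φ
  obj_eq : F.obj mid = M
  map_lam : F.map lam = l ≫ eqToHom obj_eq.symm
  map_rho : F.map rho = eqToHom obj_eq ≫ ρ

/-- Discrete Conduché fibration: unique factorization lifting. -/
def IsDCF (F : E ⥤ B) : Prop :=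
  ∀ {Y X : E} (φ : Y ⟶ X) {M : B} (l : F.obj Y ⟶ M) (ρ : M ⟶ F.obj X),
    F.map φ = l ≫ ρ →
      Nonempty (ConducheLift F φ l ρ) ∧ ∀ L L' : ConducheLift F φ l ρ, L = L'

/-- Right Ore condition: every cospan can be completed to a commutative square. -/
def RightOre (C : Type u'') [Category.{v''} C] : Prop :=
  ∀ {A X D : C} (m : A ⟶ D) (n : X ⟶ D),
    ∃ (P : C) (p : P ⟶ A) (q : P ⟶ X), p ≫ m = q ≫ n

/-- Strongly right Ore. -/
def StronglyRightOre (C : Type u'') [Category.{v''} C] : Prop :=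
  RightOre C ∧
    ∀ {A X D Z₁ Z₂ : C} (m : A ⟶ D) (n : X ⟶ D)
      (p₁ : Z₁ ⟶ A) (q₁ : Z₁ ⟶ X) (p₂ : Z₂ ⟶ A) (q₂ : Z₂ ⟶ X),
      p₁ ≫ m = q₁ ≫ n → p₂ ≫ m = q₂ ≫ n →
        ∃ (W : C) (a : W ⟶ Z₁) (b : W ⟶ Z₂), a ≫ p₁ = b ≫ p₂ ∧ a ≫ q₁ = b ≫ q₂

/-- Locally split: each induced slice functor admits a section. -/
def LocallySplit (F : E ⥤ B) : Prop :=
  ∀ X : E, ∃ x : Over (F.obj X) ⥤ Over X, x ⋙ Over.post F = 𝟭 (Over (F.obj X))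

/-- Kumjian-Pask fibration. -/
def IsKPF (F : E ⥤ B) : Prop :=
  IsDCF F ∧ LocallySplit F ∧ StronglyRightOre B

/-- Row-finite functor. -/
def RowFinite (F : E ⥤ B) : Prop :=
  ∀ (X : E) {M : B} (b : M ⟶ F.obj X),
    {p : Σ Y : E, Y ⟶ X | ∃ h : F.obj p.1 = M, F.map p.2 = eqToHom h ≫ b}.Finite

/-- Strongly surjective functor. -/
def StronglySurjective (F : E ⥤ B) : Prop :=
  Function.Surjective F.obj ∧
    ∀ (X : E) {M : B} (b : M ⟶ F.obj X),
      ∃ (Y : E) (α : Y ⟶ X) (h : F.obj Y = M), F.map α = eqToHom h ≫ b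

/-- An infinite path to `X`: a section of the induced slice functor. -/
structure InfPath (F : E ⥤ B) (X : E) where
  fn : Over (F.obj X) ⥤ Over X
  sec : fn ⋙ Over.post F = 𝟭 (Over (F.obj X))

/-- The infinite path space `F^∞`. -/
def FInf (F : E ⥤ B) := Σ X : E, InfPath F X

/-- `x ∈ Z(μ)` for `x` an infinite path to the target of `μ`. -/
abbrev InPathOf {F : E ⥤ B} {Y X : E} (μ : Y ⟶ X) (x : InfPath F X) : Prop :=
  x.fn.obj (Over.mk (F.map μ)) = Over.mk μ

/-- `Z(X) ⊆ F^∞`. -/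
def ZObj (F : E ⥤ B) (X : E) : Set (FInf F) := {p | p.1 = X}

/-- `Z(μ) ⊆ F^∞`. -/
def ZMor (F : E ⥤ B) {Y X : E} (μ : Y ⟶ X) : Set (FInf F) :=
  {p | ∃ h : p.1 = X, InPathOf μ (h ▸ p.2)}

/-- The basic sets `Z(μ)`. -/
def pathBasis (F : E ⥤ B) : Set (Set (FInf F)) :=
  {S | ∃ (Y X : E) (μ : Y ⟶ X), S = ZMor F μ}

/-- The topology on `F^∞` generated by the sets `Z(μ)`. -/
def pathTopology (F : E ⥤ B) : TopologicalSpace (FInf F) :=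
  TopologicalSpace.generateFrom (pathBasis F)

/-- The morphism `(u, g) : (g ≫ u) ⟶ u` of a slice category. -/
def oHomW {T : Type u''} [Category.{v''} T] {X A A' : T} {u : A ⟶ X} {v : A' ⟶ X}
    (g : A' ⟶ A) (w : g ≫ u = v) : Over.mk v ⟶ Over.mk u :=
  Over.homMk g w

/-- The defining relation between `w = res_μ x` and `x = ind_μ w`, on objects:
`x(a ∘ F μ) = μ ∘ w(a)` for all `a`. -/
def IndRel (F : E ⥤ B) {Y X : E} (μ : Y ⟶ X) (w : InfPath F Y) (x : InfPath F X) : Prop :=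
  ∀ {A : B} (a : A ⟶ F.obj Y),
    x.fn.obj (Over.mk (a ≫ F.map μ)) = Over.mk ((w.fn.obj (Over.mk a)).hom ≫ μ)

/-- `w = res_μ x`. -/
def ResRel (F : E ⥤ B) {Y X : E} (μ : Y ⟶ X) (x : InfPath F X) (w : InfPath F Y) : Prop :=
  InPathOf μ x ∧ IndRel F μ w x

/-- `q = ind_μ p`, at the level of `F^∞`. -/
def IndRelP (F : E ⥤ B) {Y X : E} (μ : Y ⟶ X) (pw px : FInf F) : Prop :=
  ∃ (hw : pw.1 = Y) (hx : px.1 = X),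
    InPathOf μ (hx ▸ px.2) ∧ IndRel F μ (hw ▸ pw.2) (hx ▸ px.2)

/-- `pw = res_μ px`, at the level of `F^∞`. -/
def ResRelP (F : E ⥤ B) {Y X : E} (μ : Y ⟶ X) (px pw : FInf F) : Prop :=
  ∃ (hw : pw.1 = Y) (hx : px.1 = X), ResRel F μ (hx ▸ px.2) (hw ▸ pw.2)

/-- `z' = ind_μ (res_ν z)`. -/
def Translates (F : E ⥤ B) {W U V : E} (μ : W ⟶ U) (ν : W ⟶ V)
    (z : InfPath F V) (z' : InfPath F U) : Prop :=
  ∃ w : InfPath F W, ResRel F ν z w ∧ InPathOf μ z' ∧ IndRel F μ w z'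

/-- `q = ind_μ (res_ν p)`, at the level of `F^∞`. -/
def TranslatesP (F : E ⥤ B) {W U V : E} (μ : W ⟶ U) (ν : W ⟶ V)
    (p q : FInf F) : Prop :=
  ∃ (hp : p.1 = V) (hq : q.1 = U), Translates F μ ν (hp ▸ p.2) (hq ▸ q.2)

/-- An element `(μ, ν, x)` of `𝒢_F`. -/
structure PreG (F : E ⥤ B) where
  W : E
  U : E
  V : E
  μ : W ⟶ U
  ν : W ⟶ V
  x : InfPath F V
  mem : InPathOf ν x

/-- The relation `∼` on `𝒢_F`. -/
def GERel (F : E ⥤ B) (g g' : PreG F) : Prop :=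
  (∃ hV : g.V = g'.V, hV ▸ g.x = g'.x) ∧
  (∃ (Λ : E) (lam : Λ ⟶ g.V),
     (⟨g.V, g.x⟩ : FInf F) ∈ ZMor F lam ∧
     ZMor F lam ⊆ ZMor F g.ν ∩ ZMor F g'.ν ∧
     ∀ p ∈ ZMor F lam, ∀ q : FInf F,
       TranslatesP F g.μ g.ν p q ↔ TranslatesP F g'.μ g'.ν p q) ∧
  (∃ (M : B) (a : M ⟶ F.obj g.W) (b : M ⟶ F.obj g'.W),
     MorEq (a ≫ F.map g.μ) (b ≫ F.map g'.μ) ∧ MorEq (a ≫ F.map g.ν) (b ≫ F.map g'.ν))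

/-- The groupoid `G_F` as a quotient set. -/
def GF (F : E ⥤ B) := Quot (GERel F)

/-- `k` is a composite of `g` and `h` in `G_F` (at the level of representatives). -/
def CompRel (F : E ⥤ B) (g h k : PreG F) : Prop :=
  TranslatesP F h.μ h.ν ⟨h.V, h.x⟩ ⟨g.V, g.x⟩ ∧
  ∃ (P : E) (γ : P ⟶ g.W) (η : P ⟶ h.W) (hUV : h.U = g.V),
    γ ≫ g.ν = (η ≫ h.μ) ≫ eqToHom hUV ∧
    InPathOf (γ ≫ g.ν) g.x ∧
    ∃ mem : InPathOf (η ≫ h.ν) h.x,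
      GERel F k ⟨P, g.U, h.V, γ ≫ g.μ, η ≫ h.ν, h.x, mem⟩

/-- The basic set `Z(μ,ν) ⊆ G_F`. -/
def ZPair (F : E ⥤ B) {W U V : E} (μ : W ⟶ U) (ν : W ⟶ V) : Set (GF F) :=
  {g | ∃ (x : InfPath F V) (mem : InPathOf ν x),
        g = Quot.mk (GERel F) ⟨W, U, V, μ, ν, x, mem⟩}

/-- The basic sets `Z(μ,ν)`. -/
def pairBasis (F : E ⥤ B) : Set (Set (GF F)) :=
  {s | ∃ (W U V : E) (μ : W ⟶ U) (ν : W ⟶ V), s = ZPair F μ ν}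

/-- The topology on `G_F`. -/
def gTopology (F : E ⥤ B) : TopologicalSpace (GF F) :=
  TopologicalSpace.generateFrom (pairBasis F)

/-- A subcategory of a category: a class of objects and morphisms closed under
identities and composition. -/
structure Subcat (C : Type u'') [Category.{v''} C] where
  objs : Set C
  homs : ∀ ⦃M N : C⦄, (M ⟶ N) → Prop
  id_mem : ∀ {M : C}, M ∈ objs → homs (𝟙 M)
  comp_mem : ∀ {M N P : C} {f : M ⟶ N} {g : N ⟶ P}, homs f → homs g → homs (f ≫ g)
  src_mem : ∀ {M N : C} {f : M ⟶ N}, homs f → M ∈ objs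
  tgt_mem : ∀ {M N : C} {f : M ⟶ N}, homs f → N ∈ objs

instance Subcat.cat {C : Type u''} [Category.{v''} C] (S : Subcat C) : Category S.objs where
  Hom M N := {f : M.1 ⟶ N.1 // S.homs f}
  id M := ⟨𝟙 M.1, S.id_mem M.2⟩
  comp f g := ⟨f.1 ≫ g.1, S.comp_mem f.2 g.2⟩
  id_comp f := Subtype.ext (Category.id_comp f.1)
  comp_id f := Subtype.ext (Category.comp_id f.1)
  assoc f g h := Subtype.ext (Category.assoc f.1 g.1 h.1)

/-- The inclusion functor of a subcategory. -/
def Subcat.ι {C : Type u''} [Category.{v''} C] (S : Subcat C) : S.objs ⥤ C where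
  obj M := M.1
  map f := f.1

/-- `f` is (up to the identifications of objects) the image of a morphism of `E`. -/
def InImage (F : E ⥤ B) {M N : B} (f : M ⟶ N) : Prop :=
  ∃ (Y X : E) (μ : Y ⟶ X) (hY : F.obj Y = M) (hX : F.obj X = N),
    F.map μ = eqToHom hY ≫ f ≫ eqToHom hX.symm

/-- An aperiodic infinite path. -/
def AperiodicPath (F : E ⥤ B) {X : E} (x : InfPath F X) : Prop :=
  ∀ {Y Y' : E} (α : Y ⟶ X) (β : Y' ⟶ X) (w : FInf F),
    ResRelP F α ⟨X, x⟩ w → ResRelP F β ⟨X, x⟩ w → MorEq α β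

/-- Spans in a category, as a type. -/
def SpanT (C : Type u'') [Category.{v''} C] := Σ (P Q R : C), (P ⟶ Q) × (P ⟶ R)


/-- Pairs of composable elements of `G_F`. -/
def ComposablePairs (F : E ⥤ B) : Set (GF F × GF F) :=
  {p | ∃ g h : PreG F, p.1 = Quot.mk (GERel F) g ∧ p.2 = Quot.mk (GERel F) h ∧
        TranslatesP F h.μ h.ν ⟨h.V, h.x⟩ ⟨g.V, g.x⟩}

/-! ### Lifts and factorizations in slice categories -/

/-- `Lies F o a`: the object `o` of the slice over `X` is a morphism of `E` lying over `a`, that is,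
`F` sends `o` to `a`. Stated through heterogeneous equality so that `a` may have any source. -/
def Lies (F : E ⥤ B) {X : E} (o : Over X) {A : B} (a : A ⟶ F.obj X) : Prop :=
  F.obj o.left = A ∧ F.map o.hom ≍ a

/-- `Fac F o' o c`: the morphism `o'` factors as `o` precomposed with a morphism lying over `c`;
equivalently there is a morphism `o' ⟶ o` of the slice category over `c`. -/
def Fac (F : E ⥤ B) {X : E} (o' o : Over X) {A' A : B} (c : A' ⟶ A) : Prop :=
  F.obj o'.left = A' ∧ F.obj o.left = A ∧
    ∃ f : o'.left ⟶ o.left, f ≫ o.hom = o'.hom ∧ F.map f ≍ c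

/-- Postcomposition with `μ`, on objects of slice categories. -/
abbrev push {Y X : E} (μ : Y ⟶ X) (o : Over Y) : Over X := Over.mk (o.hom ≫ μ)

variable {F : E ⥤ B}

theorem over_eq {C : Type u''} [Category.{v''} C] {X : C} {o₁ o₂ : Over X} (h : o₁ = o₂) :
    o₁.left = o₂.left ∧ o₁.hom ≍ o₂.hom := by
  subst h
  exact ⟨rfl, HEq.rfl⟩

theorem lies_iff {X : E} (o : Over X) {A : B} (a : A ⟶ F.obj X) :
    Lies F o a ↔ (Over.post F).obj o = Over.mk a := by
  constructor
  · rintro ⟨rfl, h⟩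
    obtain rfl := eq_of_heq h
    rfl
  · intro h
    have hA : F.obj o.left = A := congrArg (fun u : Over (F.obj X) => u.left) h
    subst hA
    exact ⟨rfl, (over_eq h).2⟩

theorem lies_mk {Y X : E} (μ : Y ⟶ X) : Lies F (Over.mk μ) (F.map μ) := ⟨rfl, HEq.rfl⟩

theorem Lies.push {Y X : E} (μ : Y ⟶ X) {o : Over Y} {A : B} {a : A ⟶ F.obj Y}
    (h : Lies F o a) : Lies F (push μ o) (a ≫ F.map μ) := by
  obtain ⟨rfl, h⟩ := h
  obtain rfl := eq_of_heq h
  exact ⟨rfl, heq_of_eq (F.map_comp _ _)⟩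

theorem Fac.push {Y X : E} (μ : Y ⟶ X) {o' o : Over Y} {A' A : B} {c : A' ⟶ A}
    (h : Fac F o' o c) : Fac F (push μ o') (push μ o) c := by
  obtain ⟨h₁, h₂, f, hf, hc⟩ := h
  refine ⟨h₁, h₂, f, ?_, hc⟩
  change f ≫ o.hom ≫ μ = o'.hom ≫ μ
  rw [← Category.assoc, hf]

theorem Fac.trans {X : E} {o₁ o₂ o₃ : Over X} {A₁ A₂ A₃ : B} {c : A₁ ⟶ A₂} {d : A₂ ⟶ A₃}
    (h : Fac F o₁ o₂ c) (k : Fac F o₂ o₃ d) : Fac F o₁ o₃ (c ≫ d) := by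
  obtain ⟨rfl, rfl, f, hf, hc⟩ := h
  obtain ⟨_, rfl, g, hg, hd⟩ := k
  obtain rfl := eq_of_heq hc
  obtain rfl := eq_of_heq hd
  exact ⟨rfl, rfl, f ≫ g, by rw [Category.assoc, hg, hf], heq_of_eq (F.map_comp _ _)⟩

theorem Fac.refl {X : E} (o : Over X) {A : B} {a : A ⟶ F.obj X} (h : Lies F o a) :
    Fac F o o (𝟙 A) := by
  obtain ⟨rfl, _⟩ := h
  exact ⟨rfl, rfl, 𝟙 _, Category.id_comp _, heq_of_eq (F.map_id _)⟩

/-- A morphism `γ ≫ μ` factors through `μ`. -/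
theorem fac_mk {P Y X : E} (γ : P ⟶ Y) (μ : Y ⟶ X) :
    Fac F (Over.mk (γ ≫ μ)) (Over.mk μ) (F.map γ) := ⟨rfl, rfl, γ, rfl, HEq.rfl⟩

section dCf

variable (hD : IsDCF F)
include hD

/-- Existence half of the Conduché condition. -/
theorem exists_fac {X : E} {o' : Over X} {A' A : B} (c : A' ⟶ A) (a : A ⟶ F.obj X)
    (h : Lies F o' (c ≫ a)) : ∃ o : Over X, Lies F o a ∧ Fac F o' o c := by
  obtain ⟨rfl, h⟩ := h
  obtain ⟨⟨L⟩, -⟩ := hD o'.hom c a (eq_of_heq h)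
  obtain ⟨mid, lam, rho, hc, rfl, h₁, h₂⟩ := L
  simp only [eqToHom_refl, Category.comp_id, Category.id_comp] at h₁ h₂
  exact ⟨Over.mk rho, ⟨rfl, heq_of_eq h₂⟩, rfl, rfl, lam, hc, heq_of_eq h₁⟩

/-- Uniqueness half of the Conduché condition, for the second factor. -/
theorem fac_unique {X : E} {o' o₁ o₂ : Over X} {A' A : B} {c : A' ⟶ A} {a : A ⟶ F.obj X}
    (h₁ : Lies F o₁ a) (h₂ : Lies F o₂ a) (k₁ : Fac F o' o₁ c) (k₂ : Fac F o' o₂ c) :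
    o₁ = o₂ := by
  obtain ⟨rfl, h₁⟩ := h₁
  obtain rfl := eq_of_heq h₁
  obtain ⟨rfl, _, f₁, e₁, m₁⟩ := k₁
  obtain rfl := eq_of_heq m₁
  obtain ⟨e, h₂⟩ := h₂
  obtain ⟨_, _, f₂, e₂, m₂⟩ := k₂
  have key := (hD o'.hom (F.map f₁) (F.map o₁.hom) (by rw [← e₁, F.map_comp])).2
    ⟨o₁.left, f₁, o₁.hom, e₁, rfl, by simp, by simp⟩
    ⟨o₂.left, f₂, o₂.hom, e₂, e, by
      rw [← conj_eqToHom_iff_heq _ _ rfl e] at m₂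
      simpa using m₂, by
      rw [← conj_eqToHom_iff_heq _ _ e rfl] at h₂
      simpa using h₂⟩
  obtain ⟨l₁, ⟨⟨⟩⟩, r₁⟩ := o₁
  obtain ⟨l₂, ⟨⟨⟩⟩, r₂⟩ := o₂
  injection key with i₁ i₂ i₃
  subst i₁
  obtain rfl := eq_of_heq i₃
  rfl

/-- Uniqueness half of the Conduché condition, for the first factor. -/
theorem left_unique {Y M X : E} {f₁ f₂ : Y ⟶ M} {μ : M ⟶ X} (h : f₁ ≫ μ = f₂ ≫ μ)
    (hF : F.map f₁ = F.map f₂) : f₁ = f₂ := by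
  have key := (hD (f₁ ≫ μ) (F.map f₁) (F.map μ) (F.map_comp _ _)).2
    ⟨M, f₁, μ, rfl, rfl, by simp, by simp⟩ ⟨M, f₂, μ, h.symm, rfl, by simp [hF], by simp⟩
  injection key

/-- `push μ` is injective on each fibre of `F`. -/
theorem push_cancel {Y X : E} {μ : Y ⟶ X} {o₁ o₂ : Over Y} {A : B} {a : A ⟶ F.obj Y}
    (h₁ : Lies F o₁ a) (h₂ : Lies F o₂ a) (h : push μ o₁ = push μ o₂) : o₁ = o₂ := by
  obtain ⟨l₁, ⟨⟨⟩⟩, r₁⟩ := o₁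
  obtain ⟨l₂, ⟨⟨⟩⟩, r₂⟩ := o₂
  have hl : l₁ = l₂ := congrArg (fun u : Over X => u.left) h
  subst hl
  have hr : r₁ ≫ μ = r₂ ≫ μ := eq_of_heq (over_eq h).2
  have : r₁ = r₂ := left_unique hD hr (eq_of_heq (h₁.2.trans h₂.2.symm))
  subst this
  rfl

/-- A factorization of `push μ w'` through `push μ w` comes from one of `w'` through `w`. -/
theorem Fac.of_push {Y X : E} {μ : Y ⟶ X} {w' w : Over Y} {A' A : B} {c : A' ⟶ A}
    {a : A ⟶ F.obj Y} (h' : Lies F w' (c ≫ a)) (h : Lies F w a)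
    (k : Fac F (DCFpaper.push μ w') (DCFpaper.push μ w) c) : Fac F w' w c := by
  obtain ⟨rfl, h⟩ := h
  obtain rfl := eq_of_heq h
  obtain ⟨rfl, _, f, hf, hc⟩ := k
  obtain rfl := eq_of_heq hc
  refine ⟨rfl, rfl, f, left_unique hD (μ := μ) ?_ ?_, HEq.rfl⟩
  · rw [Category.assoc]; exact hf
  · rw [F.map_comp]; exact (eq_of_heq h'.2).symm

/-! ### Infinite paths, restriction and induction -/

/-- An infinite path is the same as a compatible choice of lifts on objects: by uniqueness of
factorizations the action on morphisms is forced, and functorial. -/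
theorem exists_path {X : E} (obj : ∀ {A : B}, (A ⟶ F.obj X) → Over X)
    (hl : ∀ {A : B} (a : A ⟶ F.obj X), Lies F (obj a) a)
    (hf : ∀ {A' A : B} (c : A' ⟶ A) (a : A ⟶ F.obj X), Fac F (obj (c ≫ a)) (obj a) c) :
    ∃ x : InfPath F X, ∀ {A : B} (a : A ⟶ F.obj X), x.fn.obj (Over.mk a) = obj a := by
  have hm : ∀ {u' u : Over (F.obj X)} (c : u' ⟶ u),
      ∃ f : obj u'.hom ⟶ obj u.hom, F.map f.left ≍ c.left := by
    intro u' u c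
    have h := hf c.left u.hom
    rw [Over.w c] at h
    obtain ⟨_, _, f, e, m⟩ := h
    exact ⟨Over.homMk f e, m⟩
  have hu : ∀ {o' o : Over X} (f g : o' ⟶ o), F.map f.left = F.map g.left → f = g := by
    intro o' o f g h
    exact Over.OverMorphism.ext
      (left_unique hD (μ := o.hom) ((Over.w f).trans (Over.w g).symm) h)
  choose m hm using @hm
  have ho : ∀ u : Over (F.obj X), F.obj (obj u.hom).left = u.left := fun u => (hl u.hom).1
  have hm' : ∀ {u' u : Over (F.obj X)} (c : u' ⟶ u),
      F.map (m c).left = eqToHom (ho u') ≫ c.left ≫ eqToHom (ho u).symm := fun {u' u} c =>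
    (conj_eqToHom_iff_heq _ _ (ho u') (ho u)).2 (hm c)
  refine ⟨⟨⟨fun u => obj u.hom, fun c => m c, ?_, ?_⟩, ?_⟩, ?_⟩
  · intro u
    apply hu
    rw [hm']
    simp
  · intro u v w c d
    apply hu
    rw [hm', Over.comp_left, Over.comp_left, F.map_comp, hm', hm']
    simp
  · refine CategoryTheory.Functor.hext (fun u => (lies_iff _ _).1 (hl u.hom)) ?_
    intro u' u c
    have key : ∀ {p p' q q' : Over (F.obj X)} (f : p' ⟶ p) (g : q' ⟶ q), p' = q' → p = q →
        f.left ≍ g.left → f ≍ g := by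
      rintro p p' q q' f g rfl rfl h
      exact heq_of_eq (Over.OverMorphism.ext (eq_of_heq h))
    exact key _ _ ((lies_iff _ _).1 (hl u'.hom)) ((lies_iff _ _).1 (hl u.hom)) (hm c)
  · intro A a
    rfl

end dCf

theorem InfPath.lies {X : E} (x : InfPath F X) {A : B} (a : A ⟶ F.obj X) :
    Lies F (x.fn.obj (Over.mk a)) a :=
  (lies_iff _ _).2 (Functor.congr_obj x.sec (Over.mk a))

theorem InfPath.fac {X : E} (x : InfPath F X) {A' A : B} (c : A' ⟶ A) (a : A ⟶ F.obj X) :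
    Fac F (x.fn.obj (Over.mk (c ≫ a))) (x.fn.obj (Over.mk a)) c := by
  have key : ∀ {p p' q q' : Over (F.obj X)} (f : p' ⟶ p) (g : q' ⟶ q), p' = q' → p = q →
      f ≍ g → f.left ≍ g.left := by
    rintro p p' q q' f g rfl rfl h
    rw [eq_of_heq h]
  let f : Over.mk (c ≫ a) ⟶ Over.mk a := Over.homMk c rfl
  exact ⟨(x.lies _).1, (x.lies _).1, (x.fn.map f).left, Over.w _,
    key _ f (Functor.congr_obj x.sec _) (Functor.congr_obj x.sec _)
      (Functor.hcongr_hom x.sec f)⟩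

section dCf

variable (hD : IsDCF F)
include hD

/-- The value of an infinite path at `c ≫ a` determines its value at `a`. -/
theorem InfPath.eq_of_fac {X : E} (x : InfPath F X) {A' A : B} {c : A' ⟶ A} {a : A ⟶ F.obj X}
    {o : Over X} (ho : Lies F o a) (h : Fac F (x.fn.obj (Over.mk (c ≫ a))) o c) :
    x.fn.obj (Over.mk a) = o :=
  fac_unique hD (x.lies a) ho (x.fac c a) h

/-- `Z(γ ≫ μ) ⊆ Z(μ)`. -/
theorem InPathOf.of_comp {P Y X : E} {γ : P ⟶ Y} {μ : Y ⟶ X} {x : InfPath F X}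
    (h : InPathOf (γ ≫ μ) x) : InPathOf μ x := by
  refine x.eq_of_fac hD (c := F.map γ) (lies_mk μ) ?_
  rw [← F.map_comp, h]
  exact fac_mk γ μ

/-- Existence of `res_μ x`. -/
theorem exists_res {Y X : E} {μ : Y ⟶ X} {x : InfPath F X} (h : InPathOf μ x) :
    ∃ w : InfPath F Y, ResRel F μ x w := by
  have hw : ∀ {A : B} (a : A ⟶ F.obj Y), ∃ w : Over Y, Lies F w a ∧
      x.fn.obj (Over.mk (a ≫ F.map μ)) = push μ w := by
    intro A a
    have k := x.fac a (F.map μ)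
    rw [h] at k
    obtain ⟨e, _, f, hf, hc⟩ := k
    refine ⟨Over.mk f, ⟨e, hc⟩, ?_⟩
    change _ = Over.mk (f ≫ μ)
    have hf' : f ≫ μ = _ := hf
    rw [hf']
    rfl
  choose w hl hx using @hw
  obtain ⟨y, hy⟩ := exists_path hD w hl (fun c a => by
    refine Fac.of_push hD (μ := μ) (hl _) (hl _) ?_
    rw [← hx, ← hx, Category.assoc]
    exact x.fac _ _)
  refine ⟨y, h, fun a => ?_⟩
  rw [hy, hx]

/-- Existence of `ind_μ w`. The right Ore condition reduces the value at an arbitrary morphism `b`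
to a value of `w`, and the strong right Ore condition makes the outcome independent of the square
used. -/
theorem exists_ind (hO : StronglyRightOre B) {Y X : E} (μ : Y ⟶ X) (w : InfPath F Y) :
    ∃ x : InfPath F X, InPathOf μ x ∧ IndRel F μ w x := by
  -- `R b o`: the lift `o` of `b` is the one obtained from some Ore square over `b` and `F μ`.
  let R : ∀ {A : B}, (A ⟶ F.obj X) → Over X → Prop := fun {A} b o => Lies F o b ∧
    ∃ (P : B) (p : P ⟶ A) (q : P ⟶ F.obj Y), p ≫ b = q ≫ F.map μ ∧
      Fac F (push μ (w.fn.obj (Over.mk q))) o p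
  have hex : ∀ {A : B} (b : A ⟶ F.obj X), ∃ o, R b o := by
    intro A b
    obtain ⟨P, p, q, e⟩ := hO.1 b (F.map μ)
    obtain ⟨o, ho, hf⟩ := exists_fac hD (o' := push μ (w.fn.obj (Over.mk q))) p b
      (by rw [e]; exact (w.lies q).push μ)
    exact ⟨o, ho, P, p, q, e, hf⟩
  have hfac : ∀ {A' A : B} (c : A' ⟶ A) (b : A ⟶ F.obj X) {o' o : Over X},
      R (c ≫ b) o' → R b o → Fac F o' o c := by
    rintro A' A c b o' o ⟨hl', P', p', q', e', hf'⟩ ⟨hl, P, p, q, e, hf⟩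
    obtain ⟨Q, r, s, e₁, e₂⟩ := hO.2 b (F.map μ) p q (p' ≫ c) q' e
      (by rw [Category.assoc, e'])
    obtain ⟨o'', hl'', hf''⟩ := exists_fac hD c b hl'
    have k₁ : Fac F (push μ (w.fn.obj (Over.mk (r ≫ q)))) o (r ≫ p) :=
      ((w.fac r q).push μ).trans hf
    have k₂ : Fac F (push μ (w.fn.obj (Over.mk (r ≫ q)))) o'' (r ≫ p) := by
      rw [e₁, e₂]
      exact ((w.fac s q').push μ).trans (hf'.trans hf'')
    rw [fac_unique hD hl hl'' k₁ k₂]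
    exact hf''
  choose o ho using @hex
  obtain ⟨x, hx⟩ := exists_path hD o (fun a => (ho a).1) (fun c a => hfac c a (ho _) (ho _))
  have hind : IndRel F μ w x := by
    intro A a
    rw [hx]
    have h₂ : R (a ≫ F.map μ) (push μ (w.fn.obj (Over.mk a))) :=
      ⟨(w.lies a).push μ, A, 𝟙 A, a, Category.id_comp _, Fac.refl _ ((w.lies a).push μ)⟩
    have h₁ : R (𝟙 A ≫ a ≫ F.map μ) (o (a ≫ F.map μ)) := by
      rw [Category.id_comp]
      exact ho _
    exact fac_unique hD (ho _).1 h₂.1 (Fac.refl _ (ho _).1) (hfac _ _ h₁ h₂)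
  refine ⟨x, ?_, hind⟩
  have hid : w.fn.obj (Over.mk (𝟙 (F.obj Y))) = Over.mk (𝟙 Y) := by
    have hl := w.lies (𝟙 (F.obj Y))
    have hl' : Lies F (Over.mk (𝟙 Y)) (𝟙 (F.obj Y)) := ⟨rfl, heq_of_eq (F.map_id _)⟩
    refine fac_unique hD hl hl' (Fac.refl _ hl) ⟨hl.1, rfl, (w.fn.obj _).hom, ?_, hl.2⟩
    exact Category.comp_id _
  have := hind (𝟙 (F.obj Y))
  rw [Category.id_comp, hid] at this
  refine this.trans ?_
  change Over.mk (𝟙 Y ≫ μ) = _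
  rw [Category.id_comp]

theorem exists_translate (hO : StronglyRightOre B) {W U V : E} (μ : W ⟶ U) {ν : W ⟶ V}
    {z : InfPath F V} (h : InPathOf ν z) : ∃ z', Translates F μ ν z z' := by
  obtain ⟨w, hw⟩ := exists_res hD h
  obtain ⟨z', h₁, h₂⟩ := exists_ind hD hO μ w
  exact ⟨z', w, hw, h₁, h₂⟩

/-- The partial maps `ind_μ ∘ res_ν` and `ind_(μγ) ∘ res_(νγ)` agree on `Z(νγ)`. -/
theorem translates_comp (hR : RightOre B) {P W U V : E} (γ : P ⟶ W) (μ : W ⟶ U) (ν : W ⟶ V)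
    {z : InfPath F V} (h : InPathOf (γ ≫ ν) z) (z' : InfPath F U) :
    Translates F μ ν z z' ↔ Translates F (γ ≫ μ) (γ ≫ ν) z z' := by
  constructor
  · rintro ⟨w, ⟨_, hr⟩, _, hi⟩
    have hγ : InPathOf γ w := by
      refine push_cancel hD (μ := ν) (w.lies _) (lies_mk γ) ?_
      refine (hr _).symm.trans ?_
      rw [← F.map_comp]
      exact h
    obtain ⟨v, _, hv⟩ := exists_res hD hγ
    refine ⟨v, ⟨h, fun a => ?_⟩, ?_, fun a => ?_⟩
    · rw [F.map_comp, ← Category.assoc, hr, hv]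
      simp
    · change z'.fn.obj _ = _
      rw [F.map_comp, hi, hγ]
      rfl
    · rw [F.map_comp, ← Category.assoc, hi, hv]
      simp
  · rintro ⟨v, ⟨_, hr⟩, hm, hi⟩
    obtain ⟨w, hw⟩ := exists_res hD (InPathOf.of_comp hD h)
    refine ⟨w, hw, InPathOf.of_comp hD hm, fun {A} a => ?_⟩
    -- `w` and `v` agree on morphisms through `F γ`, and these are cofinal by the Ore condition.
    obtain ⟨Q, p, q, e⟩ := hR a (F.map γ)
    have hv : w.fn.obj (Over.mk (p ≫ a)) = push γ (v.fn.obj (Over.mk q)) := by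
      rw [e]
      refine push_cancel hD (μ := ν) (w.lies _) ((v.lies q).push γ) ?_
      refine (hw.2 _).symm.trans ?_
      rw [Category.assoc, ← F.map_comp, hr]
      simp [push]
    refine z'.eq_of_fac hD (c := p) ((w.lies a).push μ) ?_
    have hz : z'.fn.obj (Over.mk (p ≫ a ≫ F.map μ)) = push μ (w.fn.obj (Over.mk (p ≫ a))) := by
      rw [hv, ← Category.assoc, e, Category.assoc, ← F.map_comp, hi]
      simp [push]
    rw [hz]
    exact (w.fac p a).push μ

end dCf

/-- The values of `z` and `ind_μ (res_ν z)` at corresponding morphisms come from one `γ`. -/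
theorem Translates.val {W U V : E} {μ : W ⟶ U} {ν : W ⟶ V} {z : InfPath F V} {z' : InfPath F U}
    (h : Translates F μ ν z z') {A : B} (a : A ⟶ F.obj W) :
    ∃ (P : E) (γ : P ⟶ W) (e : F.obj P = A), F.map γ = eqToHom e ≫ a ∧
      z.fn.obj (Over.mk (a ≫ F.map ν)) = Over.mk (γ ≫ ν) ∧
      z'.fn.obj (Over.mk (a ≫ F.map μ)) = Over.mk (γ ≫ μ) := by
  obtain ⟨w, ⟨_, hr⟩, _, hi⟩ := h
  have hl := w.lies a
  refine ⟨_, (w.fn.obj (Over.mk a)).hom, hl.1, ?_, hr a, hi a⟩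
  exact (conj_eqToHom_iff_heq _ _ hl.1 rfl).2 hl.2 |>.trans (by simp)

/-! ### Equality in `G_F` -/

theorem mem_ZMor {Y X : E} (μ : Y ⟶ X) (x : InfPath F X) :
    (⟨X, x⟩ : FInf F) ∈ ZMor F μ ↔ InPathOf μ x :=
  ⟨fun ⟨_, h⟩ => h, fun h => ⟨rfl, h⟩⟩

theorem translatesP_iff {W U V : E} (μ : W ⟶ U) (ν : W ⟶ V) (z : InfPath F V)
    (z' : InfPath F U) : TranslatesP F μ ν ⟨V, z⟩ ⟨U, z'⟩ ↔ Translates F μ ν z z' :=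
  ⟨fun ⟨_, _, h⟩ => h, fun h => ⟨rfl, rfl, h⟩⟩

/-- The relation `∼` is an equivalence relation, so equality in `G_F` is given by `∼` itself. -/
theorem equivalence_GERel (hF : IsKPF F) : Equivalence (GERel F) where
  refl g := ⟨⟨rfl, rfl⟩, ⟨g.W, g.ν, (mem_ZMor _ _).2 g.mem, fun _ h => ⟨h, h⟩,
    fun _ _ _ => Iff.rfl⟩, ⟨_, 𝟙 _, 𝟙 _, ⟨rfl, rfl, by simp⟩, ⟨rfl, rfl, by simp⟩⟩⟩
  symm := by
    rintro ⟨W, U, V, μ, ν, x, m⟩ ⟨W', U', V', μ', ν', x', m'⟩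
    rintro ⟨⟨hV, hx⟩, ⟨Λ, lam, h₁, h₂, h₃⟩, M, a, b, ⟨e₁, e₂, e₃⟩, e₄, e₅, e₆⟩
    obtain rfl : V = V' := hV
    obtain rfl : x = x' := hx
    dsimp only at *
    exact ⟨⟨rfl, rfl⟩, ⟨Λ, lam, h₁, fun p hp => (h₂ hp).symm, fun p hp q => (h₃ p hp q).symm⟩,
      M, b, a, ⟨rfl, e₂.symm, by simp [e₃]⟩, ⟨rfl, e₅.symm, by simp [e₆]⟩⟩
  trans := by
    rintro ⟨W, U, V, μ, ν, x, m⟩ ⟨W', U', V', μ', ν', x', m'⟩ ⟨W'', U'', V'', μ'', ν'', x'', m''⟩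
    rintro ⟨⟨hV, hx⟩, ⟨Λ, lam, h₁, h₂, h₃⟩, M, a, b, ⟨e₁, e₂, e₃⟩, e₄, e₅, e₆⟩
    rintro ⟨⟨hV', hx'⟩, ⟨Λ', lam', k₁, k₂, k₃⟩, M', a', b', ⟨d₁, d₂, d₃⟩, d₄, d₅, d₆⟩
    obtain ⟨hD, -, hO⟩ := hF
    obtain rfl : V = V' := hV
    obtain rfl : x = x' := hx
    obtain rfl : V = V'' := hV'
    obtain rfl : x = x'' := hx'
    dsimp only at *
    refine ⟨⟨rfl, rfl⟩, ?_, ?_⟩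
    · -- A common refinement of `lam` and `lam'` along `x`.
      obtain ⟨P, p, q, e⟩ := hO.1 (F.map lam) (F.map lam')
      have hl := x.lies (p ≫ F.map lam)
      have hx : x.fn.obj (Over.mk (F.map (x.fn.obj (Over.mk (p ≫ F.map lam))).hom)) =
          x.fn.obj (Over.mk (p ≫ F.map lam)) := congrArg x.fn.obj ((lies_iff _ _).1 hl)
      have hsub : ∀ y : InfPath F V, InPathOf (x.fn.obj (Over.mk (p ≫ F.map lam))).hom y →
          InPathOf lam y ∧ InPathOf lam' y := by
        intro y hy
        have hy' : y.fn.obj (Over.mk (p ≫ F.map lam)) = x.fn.obj (Over.mk (p ≫ F.map lam)) :=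
          (congrArg y.fn.obj ((lies_iff _ _).1 hl)).symm.trans hy
        constructor
        · refine y.eq_of_fac hD (c := p) (lies_mk _) ?_
          rw [hy', ← (mem_ZMor _ _).1 h₁]
          exact x.fac _ _
        · refine y.eq_of_fac hD (c := q) (lies_mk _) ?_
          rw [← e, hy', ← (mem_ZMor _ _).1 k₁, e]
          exact x.fac _ _
      have hsub' : ∀ p' ∈ ZMor F (x.fn.obj (Over.mk (p ≫ F.map lam))).hom,
          p' ∈ ZMor F lam ∧ p' ∈ ZMor F lam' := by
        rintro ⟨T, y⟩ ⟨hT, hy⟩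
        obtain rfl : V = T := hT.symm
        obtain ⟨h, h'⟩ := hsub y hy
        exact ⟨⟨rfl, h⟩, ⟨rfl, h'⟩⟩
      refine ⟨_, (x.fn.obj (Over.mk (p ≫ F.map lam))).hom, (mem_ZMor _ _).2 hx, ?_, ?_⟩
      · intro p' hp'
        exact ⟨(h₂ (hsub' p' hp').1).1, (k₂ (hsub' p' hp').2).2⟩
      · intro p' hp' q'
        exact (h₃ p' (hsub' p' hp').1 q').trans (k₃ p' (hsub' p' hp').2 q')
    · obtain ⟨Q, r, s, e⟩ := hO.1 b a'
      refine ⟨Q, r ≫ a, s ≫ b', ⟨rfl, e₂.trans d₂, ?_⟩, ⟨rfl, rfl, ?_⟩⟩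
      · simp only [eqToHom_refl, Category.id_comp, Category.assoc] at e₃ d₃ ⊢
        rw [e₃, ← Category.assoc r b, e, Category.assoc, ← Category.assoc a', d₃]
        simp
      · simp only [eqToHom_refl, Category.id_comp, Category.assoc, Category.comp_id] at e₆ d₆ ⊢
        rw [e₆, ← Category.assoc r b, e, Category.assoc, d₆]

theorem GERel_of_eq (hF : IsKPF F) {g g' : PreG F}
    (h : Quot.mk (GERel F) g = Quot.mk (GERel F) g') : GERel F g g' :=
  (equivalence_GERel hF).eqvGen_iff.1 (Quot.eqvGen_exact h)

/-- Related triples have a common translate of their common path. -/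
theorem GERel.common {g g' : PreG F} (hF : IsKPF F) (h : GERel F g g') :
    ∃ (hV : g.V = g'.V) (hU : g.U = g'.U) (z : InfPath F g.U), hV ▸ g.x = g'.x ∧
      Translates F g.μ g.ν g.x z ∧ Translates F g'.μ g'.ν g'.x (hU ▸ z) := by
  obtain ⟨W, U, V, μ, ν, x, m⟩ := g
  obtain ⟨W', U', V', μ', ν', x', m'⟩ := g'
  obtain ⟨⟨hV, hx⟩, ⟨Λ, lam, h₁, h₂, h₃⟩, -⟩ := h
  obtain rfl : V = V' := hV
  obtain rfl : x = x' := hx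
  obtain ⟨z, hz⟩ := exists_translate hF.1 hF.2.2 μ m
  obtain ⟨_, hU, hz'⟩ := (h₃ _ h₁ ⟨U, z⟩).1 ((translatesP_iff _ _ _ _).2 hz)
  exact ⟨rfl, hU, z, rfl, hz, hz'⟩

/-- `[μ, ν, x] = [μγ, νγ, x]` for `x ∈ Z(νγ)`. -/
theorem mk_comp (hF : IsKPF F) {P W U V : E} (γ : P ⟶ W) (μ : W ⟶ U) (ν : W ⟶ V)
    (x : InfPath F V) (h : InPathOf (γ ≫ ν) x) (h' : InPathOf ν x) :
    (Quot.mk (GERel F) ⟨P, U, V, γ ≫ μ, γ ≫ ν, x, h⟩ : GF F) =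
      Quot.mk (GERel F) ⟨W, U, V, μ, ν, x, h'⟩ := by
  refine Quot.sound ⟨⟨rfl, rfl⟩, ⟨P, γ ≫ ν, (mem_ZMor _ _).2 h, ?_, ?_⟩,
    ⟨F.obj P, 𝟙 _, F.map γ, ⟨rfl, rfl, by simp⟩, ⟨rfl, rfl, by simp⟩⟩⟩
  · rintro ⟨T, y⟩ ⟨hT, hy⟩
    obtain rfl : V = T := hT.symm
    exact ⟨⟨rfl, hy⟩, ⟨rfl, InPathOf.of_comp hF.1 hy⟩⟩
  · rintro ⟨S, y⟩ ⟨hS, hy⟩ ⟨T, q⟩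
    obtain rfl : V = S := hS.symm
    constructor
    · rintro ⟨_, hT, k⟩
      obtain rfl : U = T := hT.symm
      exact ⟨rfl, rfl, (translates_comp hF.1 hF.2.2.1 γ μ ν hy q).2 k⟩
    · rintro ⟨_, hT, k⟩
      obtain rfl : U = T := hT.symm
      exact ⟨rfl, rfl, (translates_comp hF.1 hF.2.2.1 γ μ ν hy q).1 k⟩

theorem ZPair_comp_subset (hF : IsKPF F) {P W U V : E} (γ : P ⟶ W) (μ : W ⟶ U) (ν : W ⟶ V) :
    ZPair F (γ ≫ μ) (γ ≫ ν) ⊆ ZPair F μ ν := by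
  rintro _ ⟨x, h, rfl⟩
  exact ⟨x, InPathOf.of_comp hF.1 h, mk_comp hF γ μ ν x h _⟩

/-! ### Intersections of the sets `Z(μ, ν)` -/

/-- Sets `Z(μ, ν)` and `Z(μ', ν')` that meet have `(μ, ν) = (μ', ν')` as soon as these pairs have
the same image under `F`: `ν` is the value of a common path `x` at `F ν`, and `μ` is the value of
the common translate of `x` at `F μ`. -/
theorem eq_of_meet (hF : IsKPF F) {P P' U V : E} {μ : P ⟶ U} {ν : P ⟶ V} {μ' : P' ⟶ U}
    {ν' : P' ⟶ V} (hμ : F.map μ ≍ F.map μ') (hν : F.map ν ≍ F.map ν')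
    (hP : F.obj P = F.obj P') (h : (ZPair F μ ν ∩ ZPair F μ' ν').Nonempty) :
    (⟨P, U, V, (μ, ν)⟩ : SpanT E) = ⟨P', U, V, (μ', ν')⟩ := by
  obtain ⟨_, ⟨x, m, rfl⟩, y, m', e⟩ := h
  obtain ⟨_, _, z, hxy, ht, ht'⟩ := (GERel_of_eq hF e).common hF
  obtain rfl : x = y := hxy
  obtain ⟨_, _, hz, _⟩ := ht
  obtain ⟨_, _, hz', _⟩ := ht'
  have key : ∀ {X : E} (x : InfPath F X) {f : P ⟶ X} {f' : P' ⟶ X}, F.map f ≍ F.map f' →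
      InPathOf f x → InPathOf f' x → P = P' ∧ f ≍ f' := by
    intro X x f f' hf h h'
    have hl : Lies F (Over.mk f) (F.map f') := ⟨hP, hf⟩
    have hx := congrArg x.fn.obj ((lies_iff _ _).1 hl)
    exact over_eq (h.symm.trans (hx.trans h'))
  obtain ⟨rfl, h₁⟩ := key x hν m m'
  obtain ⟨-, h₂⟩ := key z hμ hz hz'
  rw [eq_of_heq h₁, eq_of_heq h₂]

/-- The set `I` of spans attached to morphisms `a`, `b` of `B`. -/
def spanSet (F : E ⥤ B) {W U V W' U' V' : E} (α : W ⟶ U) (β : W ⟶ V) (σ : W' ⟶ U')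
    (τ : W' ⟶ V') {M : B} (a : M ⟶ F.obj W) (b : M ⟶ F.obj W') : Set (SpanT E) :=
  {p : SpanT E |
    (∃ (γ : p.1 ⟶ W) (h : F.obj p.1 = M), F.map γ = eqToHom h ≫ a ∧
      p = ⟨p.1, U, V, (γ ≫ α, γ ≫ β)⟩) ∧
    (∃ (η : p.1 ⟶ W') (h : F.obj p.1 = M), F.map η = eqToHom h ≫ b ∧
      p = ⟨p.1, U', V', (η ≫ σ, η ≫ τ)⟩)}

/-- The inclusion of the intersection in the union. The morphisms `a`, `b` are fixed, and need not
be those witnessing the equality of the two classes of the given element. -/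
theorem exists_mem_spanSet (hF : IsKPF F) {W U V W' : E} (α : W ⟶ U) (β : W ⟶ V)
    (σ : W' ⟶ U) (τ : W' ⟶ V) {M : B} (a : M ⟶ F.obj W) (b : M ⟶ F.obj W')
    (hα : a ≫ F.map α = b ≫ F.map σ) (hβ : a ≫ F.map β = b ≫ F.map τ) {g : GF F}
    (hg : g ∈ ZPair F α β ∩ ZPair F σ τ) :
    ∃ p ∈ spanSet F α β σ τ a b, g ∈ ZPair F p.2.2.2.1 p.2.2.2.2 := by
  obtain ⟨⟨x, m, rfl⟩, y, m', e⟩ := hg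
  obtain ⟨_, _, z, hxy, ht, ht'⟩ := (GERel_of_eq hF e).common hF
  obtain rfl : x = y := hxy
  obtain ⟨P, γ, hP, hγ, h₁, h₂⟩ := ht.val a
  obtain ⟨P', η, hP', hη, h₃, h₄⟩ := ht'.val b
  rw [← hβ, h₁] at h₃
  dsimp only at h₄
  rw [← hα, h₂] at h₄
  obtain ⟨rfl, h₃⟩ := over_eq h₃
  obtain ⟨-, h₄⟩ := over_eq h₄
  have h₃ : γ ≫ β = η ≫ τ := eq_of_heq h₃
  have h₄ : γ ≫ α = η ≫ σ := eq_of_heq h₄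
  have hm : InPathOf (γ ≫ β) x := by
    subst hP
    change x.fn.obj _ = _
    rw [← h₁, F.map_comp, hγ]
    simp
  exact ⟨⟨P, U, V, (γ ≫ α, γ ≫ β)⟩, ⟨⟨γ, hP, hγ, rfl⟩, ⟨η, hP, hη,
    congrArg₂ (fun f g => (⟨P, U, V, (f, g)⟩ : SpanT E)) h₄ h₃⟩⟩,
    x, hm, (mk_comp hF γ α β x hm m).symm⟩

theorem mem_spanSet {W U V W' U' V' P : E} {α : W ⟶ U} {β : W ⟶ V} {σ : W' ⟶ U'}
    {τ : W' ⟶ V'} {M : B} {a : M ⟶ F.obj W} {b : M ⟶ F.obj W'}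
    {p : Σ (Q R : E), (P ⟶ Q) × (P ⟶ R)} (h : (⟨P, p⟩ : SpanT E) ∈ spanSet F α β σ τ a b) :
    ∃ (γ : P ⟶ W) (h : F.obj P = M), F.map γ = eqToHom h ≫ a ∧
      p = ⟨U, V, (γ ≫ α, γ ≫ β)⟩ := by
  obtain ⟨⟨γ, hP, hγ, hp⟩, -⟩ := h
  exact ⟨γ, hP, hγ, eq_of_heq (Sigma.mk.inj hp).2⟩

/-- The decomposition of a nonempty intersection: the morphisms `a`, `b` come from the equality of
two classes representing any one of its elements. -/
theorem exists_decomposition (hF : IsKPF F)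
    {W U V W' U' V' : E} (α : W ⟶ U) (β : W ⟶ V) (σ : W' ⟶ U') (τ : W' ⟶ V')
    (hne : (ZPair F α β ∩ ZPair F σ τ).Nonempty) :
    ∃ (M : B) (a : M ⟶ F.obj W) (b : M ⟶ F.obj W'),
      (spanSet F α β σ τ a b).Nonempty ∧
      ZPair F α β ∩ ZPair F σ τ =
        (⋃ p ∈ spanSet F α β σ τ a b, ZPair F p.2.2.2.1 p.2.2.2.2) ∧
      (spanSet F α β σ τ a b).Pairwise (fun p q =>
        Disjoint (ZPair F p.2.2.2.1 p.2.2.2.2) (ZPair F q.2.2.2.1 q.2.2.2.2)) := by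
  obtain ⟨g, hg⟩ := hne
  obtain ⟨⟨x, m, rfl⟩, y, m', e⟩ := id hg
  have hr := GERel_of_eq hF e
  obtain ⟨hV, hU, -⟩ := hr.common hF
  obtain ⟨-, -, M, a, b, ⟨_, _, hα⟩, _, _, hβ⟩ := hr
  obtain rfl : V = V' := hV
  obtain rfl : U = U' := hU
  simp only [eqToHom_refl, Category.id_comp, Category.comp_id] at hα hβ
  refine ⟨M, a, b, ?_, ?_, ?_⟩
  · obtain ⟨p, hp, -⟩ := exists_mem_spanSet hF α β σ τ a b hα hβ hg
    exact ⟨p, hp⟩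
  · apply Set.Subset.antisymm
    · intro k hk
      obtain ⟨p, hp, hkp⟩ := exists_mem_spanSet hF α β σ τ a b hα hβ hk
      exact Set.mem_biUnion hp hkp
    · refine Set.iUnion₂_subset ?_
      rintro p ⟨⟨γ, _, _, hp⟩, η, _, _, hp'⟩
      refine Set.subset_inter ?_ ?_
      · rw [hp]
        exact ZPair_comp_subset hF γ α β
      · rw [hp']
        exact ZPair_comp_subset hF η σ τ
  · rintro ⟨P, p⟩ hp ⟨P', p'⟩ hp' hne
    obtain ⟨γ, hP, hγ, rfl⟩ := mem_spanSet hp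
    obtain ⟨γ', hP', hγ', rfl⟩ := mem_spanSet hp'
    rw [Set.disjoint_iff_inter_eq_empty]
    by_contra hm
    apply hne
    have key : ∀ {X : E} (f : W ⟶ X), F.map (γ ≫ f) ≍ F.map (γ' ≫ f) := by
      intro X f
      rw [F.map_comp, F.map_comp, hγ, hγ']
      subst hP
      simp only [eqToHom_refl, Category.id_comp, Category.assoc]
      exact (eqToHom_comp_heq _ _).symm
    exact eq_of_meet hF (key α) (key β) (hP.trans hP'.symm) (Set.nonempty_iff_ne_empty.2 hm)

theorem statement_16 (F : E ⥤ B) (hF : IsKPF F) (hrf : RowFinite F)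
    {W U V W' U' V' : E} (α : W ⟶ U) (β : W ⟶ V) (σ : W' ⟶ U') (τ : W' ⟶ V')
    (hne : (ZPair F α β ∩ ZPair F σ τ).Nonempty) :
    (∃ (M : B) (a : M ⟶ F.obj W) (b : M ⟶ F.obj W') (I : Set (SpanT E)),
      I = {p : SpanT E |
            (∃ (γ : p.1 ⟶ W) (h : F.obj p.1 = M), F.map γ = eqToHom h ≫ a ∧
              p = ⟨p.1, U, V, (γ ≫ α, γ ≫ β)⟩) ∧
            (∃ (η : p.1 ⟶ W') (h : F.obj p.1 = M), F.map η = eqToHom h ≫ b ∧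
              p = ⟨p.1, U', V', (η ≫ σ, η ≫ τ)⟩)} ∧
      I.Nonempty ∧
      ZPair F α β ∩ ZPair F σ τ = (⋃ p ∈ I, ZPair F p.2.2.2.1 p.2.2.2.2) ∧
      I.Pairwise (fun p q =>
        Disjoint (ZPair F p.2.2.2.1 p.2.2.2.2) (ZPair F q.2.2.2.1 q.2.2.2.2))) ∧
    (∀ s ∈ pairBasis F, ∀ t ∈ pairBasis F, ∀ g ∈ s ∩ t,
      ∃ u ∈ pairBasis F, g ∈ u ∧ u ⊆ s ∩ t) := by
  refine ⟨?_, ?_⟩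
  · obtain ⟨M, a, b, h⟩ := exists_decomposition hF α β σ τ hne
    exact ⟨M, a, b, _, rfl, h⟩
  · rintro _ ⟨_, _, _, μ, ν, rfl⟩ _ ⟨_, _, _, μ', ν', rfl⟩ g hg
    obtain ⟨M, a, b, -, h, -⟩ := exists_decomposition hF μ ν μ' ν' ⟨g, hg⟩
    rw [h] at hg ⊢
    obtain ⟨p, hp, hgp⟩ := Set.mem_iUnion₂.1 hg
    exact ⟨_, ⟨_, _, _, p.2.2.2.1, p.2.2.2.2, rfl⟩, hgp,
      Set.subset_biUnion_of_mem (u := fun p : SpanT E => ZPair F p.2.2.2.1 p.2.2.2.2) hp⟩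

end DCFpaper
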